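/- arXiv:2106.05918 — 5 statements merged into one kernel-verified Lean document; each statement's English description precedes it below -/
import Mathlib

section
/- For every j ∈ {1,…,n}, Cov_*(s*, w_j*) = e_j − s₀, and Var_*(Σ_{j=1}^n w_j*(e_j − s₀)) = Σ_{j=1}^n (e_j − s₀)². Consequently the three variance estimators coincide: Var_*(l*) = JK_B = IJ_B, where l* = Σ_j w_j*(e_j − s₀), JK_B := Σ_{j=1}^n (e_j − s₀)² and IJ_B := Σ_{j=1}^n Cov_*(s*, w_j*)². -/
open Finset

/-- The bootstrap expectation operator: `n` i.i.d. draws uniform on `{x 1, …, x n}` are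
encoded by index maps `σ : Fin n → Fin n`, each having probability `n⁻ⁿ`. -/
noncomputable def bootE (n : ℕ) (g : (Fin n → Fin n) → ℝ) : ℝ :=
  ((n : ℝ) ^ n)⁻¹ * ∑ σ : Fin n → Fin n, g σ

/-- The bootstrap count `w_j* = #{i : X_i* = x_j}` as a real number. -/
noncomputable def bootCount (n : ℕ) (j : Fin n) (σ : Fin n → Fin n) : ℝ :=
  ((univ.filter fun i => σ i = j).card : ℝ)

/-- Covariance with respect to the bootstrap resampling. -/
noncomputable def bootCov (n : ℕ) (f g : (Fin n → Fin n) → ℝ) : ℝ :=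
  bootE n (fun σ => f σ * g σ) - bootE n f * bootE n g

/-- Variance with respect to the bootstrap resampling. -/
noncomputable def bootVar (n : ℕ) (f : (Fin n → Fin n) → ℝ) : ℝ :=
  bootCov n f f

theorem boot_sum_update (n : ℕ) (i j : Fin n) (g : (Fin n → Fin n) → ℝ) :
    ∑ σ : Fin n → Fin n, g (Function.update σ i j)
      = n * ∑ σ : Fin n → Fin n, (if σ i = j then g σ else 0) := by
  have key : ∀ k : Fin n, ∑ σ : Fin n → Fin n, (if σ i = k then g (Function.update σ i j) else 0)
      = ∑ σ : Fin n → Fin n, (if σ i = j then g σ else 0) := by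
    intro k
    have hinv : Function.Involutive
        (fun σ : Fin n → Fin n => Function.update σ i (Equiv.swap j k (σ i))) := by
      intro σ
      simp
    refine Fintype.sum_equiv hinv.toPerm _ _ ?_
    intro σ
    simp only [Function.Involutive.coe_toPerm, Function.update_self]
    by_cases h : σ i = k
    · simp [h]
    · have : Equiv.swap j k (σ i) ≠ j := by
        intro h2
        apply h
        have := congrArg (Equiv.swap j k) h2
        simpa using this
      simp [h, this]
  calc ∑ σ : Fin n → Fin n, g (Function.update σ i j)
      = ∑ σ : Fin n → Fin n, ∑ k, (if σ i = k then g (Function.update σ i j) else 0) := by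
        simp
    _ = ∑ k : Fin n, ∑ σ : Fin n → Fin n, (if σ i = k then g (Function.update σ i j) else 0) :=
        Finset.sum_comm
    _ = _ := by simp [key]

theorem boot_sum_symm (n : ℕ) (i i' j : Fin n) (g : (Fin n → Fin n) → ℝ)
    (hg : ∀ (π : Equiv.Perm (Fin n)) (σ : Fin n → Fin n), g (σ ∘ π) = g σ) :
    ∑ σ : Fin n → Fin n, (if σ i = j then g σ else 0)
      = ∑ σ : Fin n → Fin n, (if σ i' = j then g σ else 0) := by
  refine Fintype.sum_equiv (Equiv.arrowCongr (Equiv.swap i i') (Equiv.refl _)) _ _ ?_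
  intro σ
  have h : (Equiv.arrowCongr (Equiv.swap i i') (Equiv.refl (Fin n))) σ
      = σ ∘ (Equiv.swap i i') := by
    ext k; simp [Equiv.arrowCongr]
  rw [h, hg]
  simp

theorem bootCount_eq (n : ℕ) (j : Fin n) (σ : Fin n → Fin n) :
    bootCount n j σ = ∑ i, if σ i = j then (1 : ℝ) else 0 := by
  simp [bootCount]

theorem bootE_mul_count (n : ℕ) (i j : Fin n) (g : (Fin n → Fin n) → ℝ)
    (hg : ∀ (π : Equiv.Perm (Fin n)) (σ : Fin n → Fin n), g (σ ∘ π) = g σ) :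
    bootE n (fun σ => g σ * bootCount n j σ)
      = bootE n (fun σ => g (Function.update σ i j)) := by
  unfold bootE
  rw [boot_sum_update]
  congr 1
  simp only [bootCount_eq, Finset.mul_sum, mul_ite, mul_one, mul_zero]
  rw [Finset.sum_comm, Finset.sum_congr rfl (fun i' _ => boot_sum_symm n i' i j g hg)]
  simp [Finset.mul_sum]

theorem bootE_const (n : ℕ) (hn : n ≠ 0) (c : ℝ) : bootE n (fun _ => c) = c := by
  have : (n : ℝ) ≠ 0 := by exact_mod_cast hn
  simp [bootE]

theorem bootE_sum {ι : Type*} (n : ℕ) (t : Finset ι) (f : ι → (Fin n → Fin n) → ℝ) :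
    bootE n (fun σ => ∑ k ∈ t, f k σ) = ∑ k ∈ t, bootE n (f k) := by
  unfold bootE
  rw [Finset.sum_comm, Finset.mul_sum]

theorem bootE_mul_const (n : ℕ) (f : (Fin n → Fin n) → ℝ) (c : ℝ) :
    bootE n (fun σ => f σ * c) = bootE n f * c := by
  unfold bootE
  rw [← Finset.sum_mul, mul_assoc]

theorem bootE_count (n : ℕ) (j : Fin n) : bootE n (bootCount n j) = 1 := by
  have h := bootE_mul_count n j j (fun _ => 1) (fun _ _ => rfl)
  simp only [one_mul] at h
  exact h.trans (bootE_const n (by have := j.pos; omega) 1)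

theorem sum_bootE_update (n : ℕ) (i : Fin n) (g : (Fin n → Fin n) → ℝ) :
    ∑ j, bootE n (fun σ => g (Function.update σ i j)) = n * bootE n g := by
  unfold bootE
  simp only [boot_sum_update]
  rw [← Finset.mul_sum, ← Finset.mul_sum, Finset.sum_comm]
  simp
  ring

theorem bootE_coord (n : ℕ) (i : Fin n) (a : Fin n → ℝ) (ha : ∑ j, a j = 0) :
    bootE n (fun σ => a (σ i)) = 0 := by
  have h := sum_bootE_update n i (fun σ => a (σ i))
  simp only [Function.update_self] at h
  have hn : n ≠ 0 := by have := i.pos; omega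
  simp only [bootE_const n hn, ha] at h
  have : (n : ℝ) ≠ 0 := by exact_mod_cast hn
  simpa [this] using h.symm

theorem boot_lin (n : ℕ) (a : Fin n → ℝ) (σ : Fin n → Fin n) :
    ∑ j, bootCount n j σ * a j = ∑ i, a (σ i) := by
  simp only [bootCount_eq, Finset.sum_mul, ite_mul, one_mul, zero_mul]
  rw [Finset.sum_comm]
  simp

theorem boot_var_lin (n : ℕ) (i₀ : Fin n) (a : Fin n → ℝ) (ha : ∑ j, a j = 0) :
    bootVar n (fun σ => ∑ j, bootCount n j σ * a j) = ∑ j, a j ^ 2 := by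
  have hn : n ≠ 0 := by have := i₀.pos; omega
  have hL : bootE n (fun σ => ∑ j, bootCount n j σ * a j) = 0 := by
    simp only [boot_lin]
    rw [bootE_sum]
    exact Finset.sum_eq_zero (fun i _ => bootE_coord n i a ha)
  unfold bootVar bootCov
  rw [hL, mul_zero, sub_zero]
  have h1 : (fun σ : Fin n → Fin n =>
      (∑ j, bootCount n j σ * a j) * ∑ j, bootCount n j σ * a j)
      = fun σ => ∑ j, ((∑ i, a (σ i)) * bootCount n j σ) * a j := by
    funext σ
    rw [boot_lin, ← boot_lin n a σ, Finset.mul_sum]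
    exact Finset.sum_congr rfl (fun j _ => by ring)
  rw [h1, bootE_sum]
  refine Finset.sum_congr rfl (fun j _ => ?_)
  rw [bootE_mul_const, bootE_mul_count n i₀ j (fun σ => ∑ i, a (σ i))
    (fun π σ => Equiv.sum_comp π (fun i => a (σ i))), bootE_sum, sq]
  congr 1
  rw [Finset.sum_eq_single i₀]
  · simp [bootE_const n hn]
  · intro i _ hi
    simp only [Function.update_of_ne hi]
    exact bootE_coord n i a ha
  · simp

/-- for every `j`, `Cov_*(s*, w_j*) = e_j − s₀`, and
`Var_*(Σ_j w_j* (e_j − s₀)) = Σ_j (e_j − s₀)²`.  Consequently the three variance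
estimators coincide: `Var_*(l*) = JK_B = IJ_B`, where `l* = Σ_j w_j*(e_j − s₀)`,
`JK_B = Σ_j (e_j − s₀)²` and `IJ_B = Σ_j Cov_*(s*, w_j*)²`. -/
theorem bootstrap_three_estimators_coincide
    (n : ℕ) (hn : 2 ≤ n) (x : Fin n → ℝ) (hx : Function.Injective x)
    (s : (Fin n → ℝ) → ℝ)
    (hsym : ∀ (π : Equiv.Perm (Fin n)) (v : Fin n → ℝ), s (v ∘ π) = s v)
    (s₀ : ℝ) (hs₀ : s₀ = bootE n fun σ => s (fun i => x (σ i)))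
    (e : Fin n → ℝ)
    (he : ∀ j, e j = bootE n fun σ => s (fun i => x (Function.update σ ⟨0, by omega⟩ j i))) :
    (∀ j : Fin n, bootCov n (fun σ => s (fun i => x (σ i))) (bootCount n j) = e j - s₀) ∧
    bootVar n (fun σ => ∑ j : Fin n, bootCount n j σ * (e j - s₀))
      = ∑ j : Fin n, (e j - s₀) ^ 2 ∧
    bootVar n (fun σ => ∑ j : Fin n, bootCount n j σ * (e j - s₀))
      = ∑ j : Fin n, (bootCov n (fun σ => s (fun i => x (σ i))) (bootCount n j)) ^ 2 := by
  have hg : ∀ (π : Equiv.Perm (Fin n)) (σ : Fin n → Fin n),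
      (fun σ : Fin n → Fin n => s (fun i => x (σ i))) (σ ∘ π)
        = (fun σ : Fin n → Fin n => s (fun i => x (σ i))) σ :=
    fun π σ => hsym π (fun i => x (σ i))
  have hcov : ∀ j : Fin n,
      bootCov n (fun σ => s (fun i => x (σ i))) (bootCount n j) = e j - s₀ := by
    intro j
    have h := bootE_mul_count n ⟨0, by omega⟩ j (fun σ => s (fun i => x (σ i))) hg
    unfold bootCov
    rw [bootE_count, mul_one, ← hs₀, he j]
    exact congrArg (· - s₀) h
  have hsum : ∑ j, (e j - s₀) = 0 := by
    have h := sum_bootE_update n ⟨0, by omega⟩ (fun σ => s (fun i => x (σ i)))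
    rw [← hs₀] at h
    rw [Finset.sum_sub_distrib, Finset.sum_congr rfl (fun j _ => he j), h]
    simp
  have hvar := boot_var_lin n ⟨0, by omega⟩ (fun j => e j - s₀) hsum
  refine ⟨hcov, hvar, ?_⟩
  simp only [hcov]
  exact hvar
end

section
/- The sequence (c_n) converges as n → ∞, and its limit c satisfies 0.24 ≤ c ≤ 0.25. (In particular, the infinitesimal jackknife systematically underestimates the variance of the bagged sample maximum of uniform data by roughly a factor of 4.) -/
open Finset Filter

/-- `a_n = Σ_{j=1}^n ((j−1)/n)ⁿ`. -/
noncomputable def aSeq (n : ℕ) : ℝ :=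
  ∑ j ∈ range n, ((j : ℝ) / n) ^ n

/-- `c_n = (n+1)·Σ_{i=1}^n [a_n − Σ_{j=i+1}^n ((j−1)/n)^{n−1}]² / ((n − a_n)(1 + a_n))`,
the ratio `E[Var_*(l*)]/Var(E_*[s*])` for the bootstrap-smoothed sample maximum of `n`
i.i.d. `Uniform[0,1]` random variables. -/
noncomputable def cSeq (n : ℕ) : ℝ :=
  ((n : ℝ) + 1) *
      (∑ i ∈ range n,
        (aSeq n - ∑ j ∈ Finset.Ico (i + 1) n, ((j : ℝ) / n) ^ (n - 1)) ^ 2) /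
    (((n : ℝ) - aSeq n) * (1 + aSeq n))

noncomputable def fK (n k : ℕ) : ℝ := (((n - k : ℕ) : ℝ) / n) ^ (n - 1)

noncomputable def tK (n m : ℕ) : ℝ := ∑ j ∈ range (n - m), ((j : ℝ) / n) ^ (n - 1)

noncomputable def rK : ℝ := Real.exp (-1)

lemma rK_pos : 0 < rK := Real.exp_pos _

lemma rK_bounds : 0.367 ≤ rK ∧ rK ≤ 0.368 := by
  have h1 := Real.exp_one_gt_d9
  have h2 := Real.exp_one_lt_d9
  have h3 : rK * Real.exp 1 = 1 := by
    unfold rK; rw [← Real.exp_add]; simp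
  have h4 := rK_pos
  constructor <;> nlinarith

lemma rK_pow (k : ℕ) : rK ^ k = Real.exp (-(k : ℝ)) := by
  unfold rK; rw [← Real.exp_nat_mul]; congr 1; ring

lemma fK_nonneg (n k : ℕ) : 0 ≤ fK n k := by unfold fK; positivity

lemma fK_zero {n k : ℕ} (hn : 2 ≤ n) (h : n ≤ k) : fK n k = 0 := by
  unfold fK
  rw [Nat.sub_eq_zero_of_le h]
  simp; omega

lemma fK_le {n : ℕ} (hn : 2 ≤ n) (k : ℕ) : fK n k ≤ 3 * rK ^ k := by
  rcases le_or_gt n k with h | h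
  · rw [fK_zero hn h]; have := rK_pos; positivity
  have hn0 : (0 : ℝ) < n := by positivity
  have hkn : (k : ℝ) / n ≤ 1 := by
    rw [div_le_one hn0]; exact_mod_cast h.le
  have e1 : ((n - k : ℕ) : ℝ) / n ≤ Real.exp (-((k : ℝ) / n)) := by
    have := Real.one_sub_le_exp_neg ((k : ℝ) / n)
    rw [Nat.cast_sub h.le, sub_div, div_self hn0.ne']; exact this
  have e2 : fK n k ≤ Real.exp (-((k : ℝ) / n)) ^ (n - 1) := by
    unfold fK; gcongr
  have e3 : Real.exp (-((k : ℝ) / n)) ^ (n - 1) = Real.exp ((k : ℝ) / n) * rK ^ k := by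
    rw [rK_pow, ← Real.exp_nat_mul, ← Real.exp_add, Nat.cast_sub (by omega)]
    congr 1; push_cast; field_simp; ring
  have e4 : Real.exp ((k : ℝ) / n) ≤ 3 := by
    have := Real.exp_one_lt_d9
    have := Real.exp_le_exp.2 hkn
    linarith
  rw [e3] at e2
  refine e2.trans ?_
  have := rK_pos
  gcongr

lemma fK_tendsto (k : ℕ) : Tendsto (fun n => fK n k) atTop (nhds (rK ^ k)) := by
  have h1 := Real.tendsto_one_add_div_pow_exp (-(k : ℝ))
  have h2 : Tendsto (fun n : ℕ => 1 + (-(k : ℝ)) / (n : ℝ)) atTop (nhds (1 + 0)) :=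
    tendsto_const_nhds.add (tendsto_const_div_atTop_nhds_zero_nat _)
  have h3 := h1.div h2 (by norm_num)
  rw [rK_pow]
  simp only [add_zero, div_one] at h3
  refine h3.congr' ?_
  filter_upwards [eventually_gt_atTop k] with n hn
  have hn0 : (0 : ℝ) < n := by exact_mod_cast (by omega : 0 < n)
  have e : ((n - k : ℕ) : ℝ) / n = 1 + (-(k : ℝ)) / (n : ℝ) := by
    rw [Nat.cast_sub hn.le]; field_simp; ring
  have hp : 0 < 1 + (-(k : ℝ)) / (n : ℝ) := by
    rw [← e]; have : 0 < n - k := by omega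
    positivity
  simp only [Pi.div_apply]
  unfold fK
  rw [e, div_eq_iff hp.ne', ← pow_succ]
  congr 1; omega

lemma tK_eq {n : ℕ} (hn : 2 ≤ n) (m : ℕ) : tK n m = ∑' k, fK n (m + k + 1) := by
  rw [tsum_eq_sum (s := range (n - m))]
  · unfold tK
    rw [← Finset.sum_range_reflect]
    refine Finset.sum_congr rfl fun k hk => ?_
    unfold fK
    rw [show n - m - 1 - k = n - (m + k + 1) by omega]
  · intro k hk
    apply fK_zero hn
    simp at hk; omega

lemma summable_r : Summable (fun k : ℕ => rK ^ k) :=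
  summable_geometric_of_lt_one rK_pos.le (by linarith [rK_bounds.2])

lemma tsum_r (m : ℕ) : ∑' k, rK ^ (m + k + 1) = rK ^ m * (rK / (1 - rK)) := by
  have : ∀ k, rK ^ (m + k + 1) = (rK ^ m * rK) * rK ^ k := fun k => by ring
  simp_rw [this]
  rw [tsum_mul_left, tsum_geometric_of_lt_one rK_pos.le (by linarith [rK_bounds.2])]
  ring

lemma summable_rm (m : ℕ) : Summable (fun k => 3 * rK ^ (m + k + 1)) := by
  have : ∀ k, 3 * rK ^ (m + k + 1) = (3 * rK ^ m * rK) * rK ^ k := fun k => by ring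
  simp_rw [this]
  exact summable_r.mul_left _

lemma tK_nonneg (n m : ℕ) : 0 ≤ tK n m := by unfold tK; positivity

lemma tK_le {n : ℕ} (hn : 2 ≤ n) (m : ℕ) : tK n m ≤ 3 * rK ^ m := by
  rw [tK_eq hn]
  have h : ∑' k, fK n (m + k + 1) ≤ ∑' k, 3 * rK ^ (m + k + 1) := by
    refine Summable.tsum_le_tsum (fun k => fK_le hn _) ?_ (summable_rm m)
    exact Summable.of_nonneg_of_le (fun k => fK_nonneg _ _) (fun k => fK_le hn _) (summable_rm m)
  refine h.trans ?_
  rw [tsum_mul_left, tsum_r]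
  have := rK_pos
  have h2 := rK_bounds.2
  have : rK / (1 - rK) ≤ 1 := by rw [div_le_one (by linarith)]; linarith
  have : rK ^ m * (rK / (1 - rK)) ≤ rK ^ m * 1 := by gcongr
  linarith

lemma tK_zero {n m : ℕ} (h : n ≤ m) : tK n m = 0 := by
  unfold tK; rw [Nat.sub_eq_zero_of_le h]; simp

lemma tK_tendsto (m : ℕ) :
    Tendsto (fun n => tK n m) atTop (nhds (rK ^ m * (rK / (1 - rK)))) := by
  rw [← tsum_r]
  have := tendsto_tsum_of_dominated_convergence (𝓕 := atTop)
    (f := fun n k => fK n (m + k + 1)) (summable_rm m) (fun k => fK_tendsto (m + k + 1))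
    (by
      filter_upwards [eventually_ge_atTop 2] with n hn k
      rw [Real.norm_of_nonneg (fK_nonneg _ _)]
      exact fK_le hn _)
  refine this.congr' ?_
  filter_upwards [eventually_ge_atTop 2] with n hn
  rw [tK_eq hn]

/-- the linear sum converges -/
lemma sum1_tendsto : ∃ L, Tendsto (fun n => ∑ m ∈ range n, tK n m) atTop (nhds L) := by
  refine ⟨∑' m, rK ^ m * (rK / (1 - rK)), ?_⟩
  · have := tendsto_tsum_of_dominated_convergence (𝓕 := atTop)
      (f := fun n m => tK n m) (summable_r.mul_left 3) (fun m => tK_tendsto m)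
      (by
        filter_upwards [eventually_ge_atTop 2] with n hn k
        rw [Real.norm_of_nonneg (tK_nonneg _ _)]
        exact tK_le hn _)
    refine this.congr fun n => ?_
    rw [tsum_eq_sum]
    intro m hm
    exact tK_zero (by simpa using hm)

lemma sum2_tendsto : Tendsto (fun n => ∑ m ∈ range n, tK n m ^ 2) atTop
    (nhds ((rK / (1 - rK)) ^ 2 / (1 - rK ^ 2))) := by
  have hb := rK_bounds
  have hp := rK_pos
  have hsq : rK ^ 2 < 1 := by nlinarith
  have hs : Summable (fun m : ℕ => 9 * (rK ^ 2) ^ m) :=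
    (summable_geometric_of_lt_one (by positivity) hsq).mul_left 9
  have := tendsto_tsum_of_dominated_convergence (𝓕 := atTop)
      (f := fun n m => tK n m ^ 2) hs (fun m => (tK_tendsto m).pow 2)
      (by
        filter_upwards [eventually_ge_atTop 2] with n hn k
        rw [Real.norm_of_nonneg (sq_nonneg _)]
        have h1 := tK_le hn k
        have h0 := tK_nonneg n k
        calc tK n k ^ 2 ≤ (3 * rK ^ k) ^ 2 := by gcongr
          _ = _ := by ring)
  have e : ∑' m, (rK ^ m * (rK / (1 - rK))) ^ 2 = (rK / (1 - rK)) ^ 2 / (1 - rK ^ 2) := by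
    have : ∀ m : ℕ, (rK ^ m * (rK / (1 - rK))) ^ 2 = (rK / (1 - rK)) ^ 2 * (rK ^ 2) ^ m :=
      fun m => by ring
    simp_rw [this]
    rw [tsum_mul_left, tsum_geometric_of_lt_one (by positivity) hsq]
    rfl
  rw [e] at this
  refine this.congr fun n => ?_
  rw [tsum_eq_sum]
  intro m hm
  rw [tK_zero (by simpa using hm)]; simp

noncomputable def dK (n : ℕ) : ℝ := aSeq n - tK n 0

lemma dK_eq {n : ℕ} (hn : 2 ≤ n) : n * dK n = - ∑' k : ℕ, ((k : ℝ) + 1) * fK n (k + 1) := by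
  have hn0 : (0 : ℝ) < n := by positivity
  rw [tsum_eq_sum (s := range n)]
  · unfold dK aSeq tK
    rw [Nat.sub_zero, ← Finset.sum_sub_distrib, ← Finset.sum_range_reflect, Finset.mul_sum,
      ← Finset.sum_neg_distrib]
    refine Finset.sum_congr rfl fun k hk => ?_
    have hk' : k + 1 ≤ n := by simpa using hk
    unfold fK
    rw [show n - 1 - k = n - (k + 1) by omega]
    obtain ⟨p, rfl⟩ : ∃ p, n = p + 1 := ⟨n - 1, by omega⟩
    rw [pow_succ, Nat.cast_sub hk']
    simp only [Nat.add_sub_cancel]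
    generalize hx : (((p + 1 : ℕ) : ℝ) - ((k + 1 : ℕ) : ℝ)) / ((p + 1 : ℕ) : ℝ) = x
    have : ((k : ℝ) + 1) = ((p + 1 : ℕ) : ℝ) * (1 - x) := by
      rw [← hx]; field_simp; push_cast; ring
    rw [this]; ring
  · intro k hk
    rw [fK_zero hn (by simp at hk; omega), mul_zero]

lemma ndK_tendsto : ∃ L, Tendsto (fun n : ℕ => n * dK n) atTop (nhds L) := by
  have hs : Summable (fun k : ℕ => ((k : ℝ) + 1) * (3 * rK ^ (k + 1))) := by
    have h1 : Summable (fun k : ℕ => ((k : ℝ)) ^ 1 * rK ^ k) :=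
      summable_pow_mul_geometric_of_norm_lt_one 1
        (by rw [Real.norm_of_nonneg rK_pos.le]; linarith [rK_bounds.2])
    have h2 := ((summable_nat_add_iff 1).2 h1).mul_left 3
    refine h2.congr fun k => ?_
    push_cast; ring
  have := tendsto_tsum_of_dominated_convergence (𝓕 := atTop)
      (f := fun (n k : ℕ) => ((k : ℝ) + 1) * fK n (k + 1)) hs
      (fun k => (fK_tendsto (k + 1)).const_mul _)
      (by
        filter_upwards [eventually_ge_atTop 2] with n hn k
        have := fK_nonneg n (k + 1)
        rw [Real.norm_of_nonneg (by positivity)]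
        have := fK_le hn (k + 1)
        gcongr)
  refine ⟨_, this.neg.congr' ?_⟩
  filter_upwards [eventually_ge_atTop 2] with n hn
  rw [dK_eq hn]

lemma dK_tendsto : Tendsto dK atTop (nhds 0) := by
  obtain ⟨L, hL⟩ := ndK_tendsto
  have h := hL.mul (tendsto_inv_atTop_nhds_zero_nat (𝕜 := ℝ))
  rw [mul_zero] at h
  refine h.congr' ?_
  filter_upwards [eventually_ge_atTop 1] with n hn
  have : (n : ℝ) ≠ 0 := by positivity
  field_simp

lemma aSeq_tendsto : Tendsto aSeq atTop (nhds (rK / (1 - rK))) := by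
  have h := dK_tendsto.add (tK_tendsto 0)
  simp only [pow_zero, one_mul, zero_add] at h
  refine h.congr fun n => ?_
  unfold dK; ring

lemma sum_eq (n : ℕ) :
    ∑ i ∈ range n, (aSeq n - ∑ j ∈ Finset.Ico (i + 1) n, ((j : ℝ) / n) ^ (n - 1)) ^ 2
      = (n * dK n) * dK n + 2 * dK n * ∑ m ∈ range n, tK n m + ∑ m ∈ range n, tK n m ^ 2 := by
  rw [← Finset.sum_range_reflect]
  have : ∀ m ∈ range n,
      (aSeq n - ∑ j ∈ Finset.Ico (n - 1 - m + 1) n, ((j : ℝ) / n) ^ (n - 1)) ^ 2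
        = dK n * dK n + 2 * dK n * tK n m + tK n m ^ 2 := by
    intro m hm
    have hm' : m < n := by simpa using hm
    rw [show n - 1 - m + 1 = n - m by omega]
    have := Finset.sum_range_add_sum_Ico (fun j : ℕ => ((j : ℝ) / n) ^ (n - 1))
      (show n - m ≤ n by omega)
    have e : aSeq n - ∑ j ∈ Finset.Ico (n - m) n, ((j : ℝ) / n) ^ (n - 1) = dK n + tK n m := by
      unfold dK tK
      rw [Nat.sub_zero, ← this]; ring
    rw [e]; ring
  rw [Finset.sum_congr rfl this, Finset.sum_add_distrib, Finset.sum_add_distrib,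
    Finset.sum_const, Finset.card_range, nsmul_eq_mul, ← Finset.mul_sum]
  ring

/-- the sequence `(c_n)` converges and its limit `c` satisfies
`0.24 ≤ c ≤ 0.25`.  (In particular, the infinitesimal jackknife systematically
underestimates the variance of the bagged sample maximum of uniform data by roughly a
factor of 4.) -/
theorem cSeq_tendsto_const_in_Icc :
    ∃ c : ℝ, Tendsto cSeq atTop (nhds c) ∧ 0.24 ≤ c ∧ c ≤ 0.25 := by
  obtain ⟨hl, hu⟩ := rK_bounds
  have hp := rK_pos
  have h1r : 0 < 1 - rK := by linarith
  have h1r2 : 0 < 1 - rK ^ 2 := by nlinarith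
  obtain ⟨L, hL⟩ := ndK_tendsto
  obtain ⟨M, hM⟩ := sum1_tendsto
  have hS := ((hL.mul dK_tendsto).add ((dK_tendsto.const_mul 2).mul hM)).add sum2_tendsto
  simp only [mul_zero, zero_mul, zero_add] at hS
  have hinv := tendsto_inv_atTop_nhds_zero_nat (𝕜 := ℝ)
  have hN : Tendsto (fun n : ℕ => 1 + (n : ℝ)⁻¹) atTop (nhds (1 + 0)) :=
    tendsto_const_nhds.add hinv
  have hD : Tendsto (fun n : ℕ => 1 - aSeq n * (n : ℝ)⁻¹) atTop
      (nhds (1 - rK / (1 - rK) * 0)) := tendsto_const_nhds.sub (aSeq_tendsto.mul hinv)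
  have hA : Tendsto (fun n : ℕ => 1 + aSeq n) atTop (nhds (1 + rK / (1 - rK))) :=
    tendsto_const_nhds.add aSeq_tendsto
  have hb : 0 < rK / (1 - rK) := by positivity
  have hfin := (hN.mul hS).div (hD.mul hA) (by rw [mul_zero, sub_zero, one_mul]; positivity)
  have hval : (1 + 0) * ((rK / (1 - rK)) ^ 2 / (1 - rK ^ 2)) /
      ((1 - rK / (1 - rK) * 0) * (1 + rK / (1 - rK))) = rK ^ 2 / ((1 - rK) * (1 - rK ^ 2)) := by
    have : 1 + rK / (1 - rK) = 1 / (1 - rK) := by field_simp; ring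
    rw [this, add_zero, mul_zero, sub_zero, one_mul, one_mul]; field_simp
  rw [hval] at hfin
  refine ⟨_, hfin.congr' ?_, ?_, ?_⟩
  · filter_upwards [eventually_ge_atTop 1] with n hn
    have hn0 : (n : ℝ) ≠ 0 := by positivity
    unfold cSeq
    rw [sum_eq]
    simp only [Pi.div_apply]
    generalize (n * dK n) * dK n + 2 * dK n * ∑ m ∈ range n, tK n m + ∑ m ∈ range n, tK n m ^ 2 = S
    rw [show (n : ℝ) + 1 = n * (1 + (n : ℝ)⁻¹) by field_simp,
      show (n : ℝ) - aSeq n = n * (1 - aSeq n * (n : ℝ)⁻¹) by field_simp, mul_assoc, mul_assoc,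
      mul_div_mul_left _ _ hn0]
  · rw [le_div_iff₀ (by positivity)]
    nlinarith [mul_nonneg (sub_nonneg.2 hl) (sub_nonneg.2 hu), pow_pos hp 3]
  · rw [div_le_iff₀ (by positivity)]
    nlinarith [mul_nonneg (sub_nonneg.2 hl) (sub_nonneg.2 hu), pow_pos hp 3]
end

section
/- For each j ∈ {1,…,n}, Cov_*(s*, w_j*) = (k/n)(e_j − s₀), where w_j* = 1{j ∈ S} is the subsampling inclusion indicator. Consequently the pseudo infinitesimal jackknife estimator satisfies ps-IJ_U := Σ_{j=1}^n Cov_*(s*, w_j*)² = (k/n)² Σ_{j=1}^n (e_j − s₀)². -/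
open Finset

/-- Evaluation of a symmetric kernel of `k` arguments on the elements of a `k`-subset
(via the order isomorphism; junk value `0` if the subset does not have `k` elements). -/
noncomputable def subVal (n k : ℕ) (x : Fin n → ℝ) (s : (Fin k → ℝ) → ℝ)
    (S : Finset (Fin n)) : ℝ :=
  if h : S.card = k then s fun i => x ((S.orderIsoOfFin h i : Fin n)) else 0

/-- Expectation over subsampling without replacement: a uniformly random `k`-subset of
`{1, …, n}`. -/
noncomputable def subE (n k : ℕ) (g : Finset (Fin n) → ℝ) : ℝ :=
  ((n.choose k : ℝ))⁻¹ * ∑ S ∈ (univ : Finset (Fin n)).powersetCard k, g S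

lemma card_filter_mem_aux (n k : ℕ) (hk : 1 ≤ k) (hkn : k ≤ n) (j : Fin n) :
    (((univ : Finset (Fin n)).powersetCard k).filter fun S => j ∈ S).card
      = (n - 1).choose (k - 1) := by
  have h1 := Finset.card_filter_add_card_filter_not
    (s := (univ : Finset (Fin n)).powersetCard k) (fun S => j ∈ S)
  have h2 : (((univ : Finset (Fin n)).powersetCard k).filter fun S => ¬ j ∈ S)
      = (univ.erase j).powersetCard k := by
    ext S
    simp only [mem_filter, mem_powersetCard, subset_univ, true_and, subset_erase]
    tauto
  rw [h2, card_powersetCard, card_powersetCard, card_erase_of_mem (mem_univ j), card_univ,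
    Fintype.card_fin] at h1
  obtain ⟨m, rfl⟩ : ∃ m, n = m + 1 := ⟨n - 1, by omega⟩
  obtain ⟨l, rfl⟩ : ∃ l, k = l + 1 := ⟨k - 1, by omega⟩
  rw [Nat.choose_succ_succ] at h1
  simp only [Nat.add_sub_cancel, Nat.succ_eq_add_one] at h1 ⊢
  omega

/-- for subsampling without replacement, for every `j`,
`Cov_*(s*, w_j*) = (k/n)(e_j − s₀)` where `w_j* = 1{j ∈ S}`; consequently
`ps-IJ_U = Σ_j Cov_*(s*, w_j*)² = (k/n)² Σ_j (e_j − s₀)²`. -/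
theorem pseudo_IJ_subsampling_covariance
    (n k : ℕ) (hk : 1 ≤ k) (hkn : k ≤ n)
    (x : Fin n → ℝ)
    (s : (Fin k → ℝ) → ℝ)
    (hsym : ∀ (π : Equiv.Perm (Fin k)) (v : Fin k → ℝ), s (v ∘ π) = s v)
    (s0 : ℝ) (hs0 : s0 = subE n k (subVal n k x s))
    (e : Fin n → ℝ)
    (he : ∀ j, e j = (((n - 1).choose (k - 1) : ℝ))⁻¹ *
      ∑ S ∈ ((univ : Finset (Fin n)).powersetCard k).filter fun S => j ∈ S,
        subVal n k x s S) :
    (∀ j : Fin n,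
      subE n k (fun S => subVal n k x s S * (if j ∈ S then (1 : ℝ) else 0))
          - s0 * subE n k (fun S => if j ∈ S then (1 : ℝ) else 0)
        = ((k : ℝ) / n) * (e j - s0)) ∧
    (∑ j : Fin n,
        (subE n k (fun S => subVal n k x s S * (if j ∈ S then (1 : ℝ) else 0))
          - s0 * subE n k (fun S => if j ∈ S then (1 : ℝ) else 0)) ^ 2)
      = ((k : ℝ) / n) ^ 2 * ∑ j : Fin n, (e j - s0) ^ 2 := by
  have main : ∀ j : Fin n,
      subE n k (fun S => subVal n k x s S * (if j ∈ S then (1 : ℝ) else 0))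
          - s0 * subE n k (fun S => if j ∈ S then (1 : ℝ) else 0)
        = ((k : ℝ) / n) * (e j - s0) := by
    intro j
    have hc := card_filter_mem_aux n k hk hkn j
    have hn0 : (n : ℝ) ≠ 0 := by
      have : n ≠ 0 := by omega
      exact_mod_cast this
    have hC : (n.choose k : ℝ) ≠ 0 := by
      exact_mod_cast (Nat.choose_pos hkn).ne'
    have hD : ((n - 1).choose (k - 1) : ℝ) ≠ 0 := by
      exact_mod_cast (Nat.choose_pos (by omega : k - 1 ≤ n - 1)).ne'
    have hid : (n : ℝ) * ((n - 1).choose (k - 1) : ℝ) = (n.choose k : ℝ) * k := by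
      obtain ⟨m, rfl⟩ : ∃ m, n = m + 1 := ⟨n - 1, by omega⟩
      obtain ⟨l, rfl⟩ : ∃ l, k = l + 1 := ⟨k - 1, by omega⟩
      exact_mod_cast Nat.add_one_mul_choose_eq m l
    have hw : subE n k (fun S => if j ∈ S then (1 : ℝ) else 0) = (k : ℝ) / n := by
      unfold subE
      rw [← Finset.sum_filter, Finset.sum_const, hc, nsmul_eq_mul, mul_one]
      field_simp
      linarith
    have hsw : subE n k (fun S => subVal n k x s S * (if j ∈ S then (1 : ℝ) else 0))
        = (k : ℝ) / n * e j := by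
      rw [he j]
      unfold subE
      simp only [mul_ite, mul_one, mul_zero]
      rw [← Finset.sum_filter, ← mul_assoc]
      congr 1
      field_simp
      linarith
    rw [hw, hsw]
    ring
  refine ⟨main, ?_⟩
  rw [Finset.mul_sum]
  refine Finset.sum_congr rfl fun j _ => ?_
  rw [main j, mul_pow]
end

section
/- For distinct indices i ≠ j, define w_{ij}* = w_i* w_j* − ((k−1)/(n−1))(w_i* + w_j*) + k(k−1)/(n(n−1)), where w_i* = 1{i ∈ S}. Then E_*[w_{ij}*] = 0 and Cov_*(s*, w_{ij}*) = (C(k,2)/C(n,2)) · (e_{ij} − e_i − e_j + s₀). Consequently the second-order pseudo infinitesimal jackknife satisfies ps-IJ_U(2) := Σ_{i≠j} Cov_*(s*, w_{ij}*)² = (C(k,2)/C(n,2))² Σ_{i≠j} (e_{ij} − e_i − e_j + s₀)². -/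
open Finset

/-- The inclusion indicator `w_i* = 1{i ∈ S}`. -/
noncomputable def wInd (n : ℕ) (i : Fin n) (S : Finset (Fin n)) : ℝ :=
  if i ∈ S then 1 else 0

/-- The second-order weight
`w_{ij}* = w_i* w_j* − ((k−1)/(n−1))(w_i* + w_j*) + k(k−1)/(n(n−1))`. -/
noncomputable def wInd2 (n k : ℕ) (i j : Fin n) (S : Finset (Fin n)) : ℝ :=
  wInd n i S * wInd n j S - (((k : ℝ) - 1) / ((n : ℝ) - 1)) * (wInd n i S + wInd n j S)
    + (k : ℝ) * ((k : ℝ) - 1) / ((n : ℝ) * ((n : ℝ) - 1))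

/-- Covariance with respect to the subsampling. -/
noncomputable def subCov (n k : ℕ) (f g : Finset (Fin n) → ℝ) : ℝ :=
  subE n k (fun S => f S * g S) - subE n k f * subE n k g

/-- Expansion of the sum against the second-order weight. -/
lemma sum_mul_wInd2 (n k : ℕ) (f : Finset (Fin n) → ℝ) (i j : Fin n) :
    ∑ S ∈ (univ : Finset (Fin n)).powersetCard k, f S * wInd2 n k i j S
      = (∑ S ∈ ((univ : Finset (Fin n)).powersetCard k).filter fun S => i ∈ S ∧ j ∈ S, f S)
        - (((k : ℝ) - 1) / ((n : ℝ) - 1)) *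
          ((∑ S ∈ ((univ : Finset (Fin n)).powersetCard k).filter fun S => i ∈ S, f S)
          + ∑ S ∈ ((univ : Finset (Fin n)).powersetCard k).filter fun S => j ∈ S, f S)
        + (k : ℝ) * ((k : ℝ) - 1) / ((n : ℝ) * ((n : ℝ) - 1)) *
          ∑ S ∈ (univ : Finset (Fin n)).powersetCard k, f S := by
  simp only [sum_filter, mul_sum, ← sum_add_distrib, ← sum_sub_distrib]
  refine sum_congr rfl fun S _ => ?_
  unfold wInd2 wInd
  by_cases hi : i ∈ S <;> by_cases hj : j ∈ S <;> simp [hi, hj] <;> ring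

lemma card_one (n k : ℕ) (hk : 2 ≤ k) (i : Fin n) :
    (((univ : Finset (Fin n)).powersetCard k).filter fun S => i ∈ S).card
      = (n - 1).choose (k - 1) := by
  have := card_filter_powersetCard_subset {i} (univ : Finset (Fin n)) k (by simp) (by simp; omega)
  simpa using this

lemma card_two (n k : ℕ) (hk : 2 ≤ k) (i j : Fin n) (hij : i ≠ j) :
    (((univ : Finset (Fin n)).powersetCard k).filter fun S => i ∈ S ∧ j ∈ S).card
      = (n - 2).choose (k - 2) := by
  have := card_filter_powersetCard_subset {i, j} (univ : Finset (Fin n)) k (by simp)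
    (by rw [card_pair hij]; omega)
  simpa [card_pair hij, insert_subset_iff] using this

/-- for distinct `i ≠ j`, `E_*[w_{ij}*] = 0` and
`Cov_*(s*, w_{ij}*) = (C(k,2)/C(n,2))(e_{ij} − e_i − e_j + s₀)`; consequently the
second-order pseudo infinitesimal jackknife satisfies
`ps-IJ_U(2) = Σ_{i≠j} Cov_*(s*, w_{ij}*)² = (C(k,2)/C(n,2))² Σ_{i≠j} (e_{ij} − e_i − e_j + s₀)²`. -/
theorem second_order_pseudo_IJ_subsampling
    (n k : ℕ) (hk : 2 ≤ k) (hkn : k ≤ n)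
    (x : Fin n → ℝ)
    (s : (Fin k → ℝ) → ℝ)
    (hsym : ∀ (π : Equiv.Perm (Fin k)) (v : Fin k → ℝ), s (v ∘ π) = s v)
    (s0 : ℝ) (hs0 : s0 = subE n k (subVal n k x s))
    (e : Fin n → ℝ)
    (he : ∀ i, e i = (((n - 1).choose (k - 1) : ℝ))⁻¹ *
      ∑ S ∈ ((univ : Finset (Fin n)).powersetCard k).filter fun S => i ∈ S,
        subVal n k x s S)
    (e2 : Fin n → Fin n → ℝ)
    (he2 : ∀ i j, e2 i j = (((n - 2).choose (k - 2) : ℝ))⁻¹ *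
      ∑ S ∈ ((univ : Finset (Fin n)).powersetCard k).filter fun S => i ∈ S ∧ j ∈ S,
        subVal n k x s S) :
    (∀ i j : Fin n, i ≠ j → subE n k (wInd2 n k i j) = 0) ∧
    (∀ i j : Fin n, i ≠ j →
      subCov n k (subVal n k x s) (wInd2 n k i j)
        = ((k.choose 2 : ℝ) / (n.choose 2 : ℝ)) * (e2 i j - e i - e j + s0)) ∧
    (∑ p ∈ (univ : Finset (Fin n × Fin n)).filter fun p => p.1 ≠ p.2,
        (subCov n k (subVal n k x s) (wInd2 n k p.1 p.2)) ^ 2)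
      = ((k.choose 2 : ℝ) / (n.choose 2 : ℝ)) ^ 2 *
          ∑ p ∈ (univ : Finset (Fin n × Fin n)).filter fun p => p.1 ≠ p.2,
            (e2 p.1 p.2 - e p.1 - e p.2 + s0) ^ 2 := by
  obtain ⟨l, rfl⟩ : ∃ l, k = l + 2 := ⟨k - 2, by omega⟩
  obtain ⟨m, rfl⟩ : ∃ m, n = m + 2 := ⟨n - 2, by omega⟩
  have hml : l ≤ m := by omega
  have hc0 : ((m.choose l : ℕ) : ℝ) ≠ 0 := by exact_mod_cast (Nat.choose_pos hml).ne'
  have hc1 : (((m + 1).choose (l + 1) : ℕ) : ℝ) = (m + 1) * m.choose l / (l + 1) := by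
    rw [eq_div_iff (by positivity)]
    exact_mod_cast (Nat.add_one_mul_choose_eq m l).symm
  have hc2 : (((m + 2).choose (l + 2) : ℕ) : ℝ)
      = (m + 2) * ((m + 1) * m.choose l / (l + 1)) / (l + 2) := by
    rw [eq_div_iff (by positivity), ← hc1]
    exact_mod_cast (Nat.add_one_mul_choose_eq (m + 1) (l + 1)).symm
  have hm1 : (m : ℝ) + 1 ≠ 0 := by positivity
  have hm2 : (m : ℝ) + 2 ≠ 0 := by positivity
  have hl1 : (l : ℝ) + 1 ≠ 0 := by positivity
  have hl2 : (l : ℝ) + 2 ≠ 0 := by positivity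
  have em : (m : ℝ) + 2 - 1 = m + 1 := by ring
  have el : (l : ℝ) + 2 - 1 = l + 1 := by ring
  have h1 : ∀ i j : Fin (m + 2), i ≠ j → subE (m + 2) (l + 2) (wInd2 (m + 2) (l + 2) i j) = 0 := by
    intro i j hij
    have h := sum_mul_wInd2 (m + 2) (l + 2) (fun _ => 1) i j
    simp only [one_mul, sum_const, nsmul_eq_mul, mul_one, card_one _ _ hk,
      card_two _ _ hk i j hij, card_powersetCard, card_univ, Fintype.card_fin] at h
    unfold subE
    rw [h]
    simp only [Nat.add_sub_cancel, show m + 2 - 1 = m + 1 from rfl,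
      show l + 2 - 1 = l + 1 from rfl, hc1, hc2]
    push_cast
    rw [em, el]
    field_simp
    ring
  have h2 : ∀ i j : Fin (m + 2), i ≠ j →
      subCov (m + 2) (l + 2) (subVal (m + 2) (l + 2) x s) (wInd2 (m + 2) (l + 2) i j)
        = (((l + 2).choose 2 : ℝ) / ((m + 2).choose 2 : ℝ)) * (e2 i j - e i - e j + s0) := by
    intro i j hij
    rw [subCov, h1 i j hij, mul_zero, sub_zero, he2, he, he, hs0]
    unfold subE
    rw [sum_mul_wInd2]
    simp only [Nat.add_sub_cancel, show m + 2 - 1 = m + 1 from rfl,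
      show l + 2 - 1 = l + 1 from rfl, hc1, hc2, Nat.cast_choose_two]
    push_cast
    rw [em, el]
    field_simp
    ring
  refine ⟨h1, h2, ?_⟩
  rw [mul_sum]
  refine sum_congr rfl fun p hp => ?_
  rw [h2 _ _ (mem_filter.mp hp).2, mul_pow]
end

section
/- One has p₀(1) = p₁(1) = C(n,k)⁻¹ =: p, and the derivatives at ε = 0 of the perturbed subsampling probabilities satisfy (d/dε) p₀(1−ε)|_{ε=0} = p · (−k − Σ_{j=0}^{k−1} j/(n−j)) and (d/dε) p₁(1−ε)|_{ε=0} = p · (n − (k+1)/2 − (1/k) Σ_{j=0}^{k−1} j(k−j)/(n−j)). -/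
open Finset

/-- `p₀(δ) = k! ∏_{j=0}^{k−1} δ/(n−jδ)`: the probability of producing a given `k`-subset
not containing the distinguished index, under the `δ`-perturbed sequential subsampling. -/
noncomputable def pZero (n k : ℕ) (δ : ℝ) : ℝ :=
  (k.factorial : ℝ) * ∏ j ∈ range k, δ / ((n : ℝ) - (j : ℝ) * δ)

/-- `p₁(δ)`: the probability of producing a given `k`-subset containing the distinguished
index, under the `δ`-perturbed sequential subsampling. -/
noncomputable def pOne (n k : ℕ) (δ : ℝ) : ℝ :=
  ((k - 1).factorial : ℝ) *
    ∑ i ∈ range k,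
      (∏ j ∈ range i, δ / ((n : ℝ) - (j : ℝ) * δ)) *
        (((n : ℝ) - ((n : ℝ) - 1) * δ) / ((n : ℝ) - (i : ℝ) * δ)) *
        ∏ j ∈ Finset.Ico (i + 1) k, 1 / ((n : ℝ) - (j : ℝ))

lemma aux_ne {n j : ℕ} (h : j < n) : (n : ℝ) - (j : ℝ) ≠ 0 := by
  have : (j : ℝ) < n := by exact_mod_cast h
  exact (sub_pos.2 this).ne'

lemma aux_choose (n k : ℕ) (hkn : k ≤ n) :
    (k.factorial : ℝ) * ∏ j ∈ range k, 1 / ((n : ℝ) - (j : ℝ)) = ((n.choose k : ℝ))⁻¹ := by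
  induction k with
  | zero => simp
  | succ k ih =>
    have ih := ih (by omega)
    have h0 := aux_ne (show k < n by omega)
    have h1 : (n.choose k : ℝ) ≠ 0 := by
      exact_mod_cast (Nat.choose_pos (by omega : k ≤ n)).ne'
    have h2 : (n.choose (k + 1) : ℝ) ≠ 0 := by
      exact_mod_cast (Nat.choose_pos hkn).ne'
    have h3 : (n.choose (k + 1) : ℝ) * ((k : ℝ) + 1) = n.choose k * ((n : ℝ) - k) := by
      have := Nat.choose_succ_right_eq n k
      rw [← Nat.cast_sub (by omega : k ≤ n)]
      exact_mod_cast this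
    rw [prod_range_succ, Nat.factorial_succ]
    push_cast
    calc ((k : ℝ) + 1) * k.factorial *
          ((∏ j ∈ range k, 1 / ((n : ℝ) - (j : ℝ))) * (1 / ((n : ℝ) - k)))
        = (k.factorial * ∏ j ∈ range k, 1 / ((n : ℝ) - (j : ℝ))) *
          (((k : ℝ) + 1) / ((n : ℝ) - k)) := by ring
      _ = _ := by
        rw [ih]
        field_simp
        linarith

lemma aux_factor (n j : ℕ) (h : j < n) :
    HasDerivAt (fun ε : ℝ => (1 - ε) / ((n : ℝ) - (j : ℝ) * (1 - ε)))
      (1 / ((n : ℝ) - j) * (-1 - (j : ℝ) / ((n : ℝ) - j))) 0 := by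
  have h0 := aux_ne h
  have h1 : HasDerivAt (fun ε : ℝ => 1 - ε) (-1) 0 := by
    simpa using (hasDerivAt_id (0 : ℝ)).const_sub 1
  have h2 := (h1.const_mul (j : ℝ)).const_sub (n : ℝ)
  have h3 := h1.div h2 (by simpa using h0)
  refine HasDerivAt.congr_deriv h3 (Eq.symm ?_)
  simp only [sub_zero, mul_one]
  field_simp

lemma aux_mid (n j : ℕ) (h : j < n) :
    HasDerivAt (fun ε : ℝ => ((n : ℝ) - ((n : ℝ) - 1) * (1 - ε)) / ((n : ℝ) - (j : ℝ) * (1 - ε)))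
      (1 / ((n : ℝ) - j) * ((n : ℝ) - 1 - (j : ℝ) / ((n : ℝ) - j))) 0 := by
  have h0 := aux_ne h
  have h1 : HasDerivAt (fun ε : ℝ => 1 - ε) (-1) 0 := by
    simpa using (hasDerivAt_id (0 : ℝ)).const_sub 1
  have h2 := (h1.const_mul (j : ℝ)).const_sub (n : ℝ)
  have h4 := (h1.const_mul ((n : ℝ) - 1)).const_sub (n : ℝ)
  have h3 := h4.div h2 (by simpa using h0)
  refine HasDerivAt.congr_deriv h3 (Eq.symm ?_)
  simp only [sub_zero, mul_one]
  field_simp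
  ring

lemma aux_prod (n m : ℕ) (h : m ≤ n) :
    HasDerivAt (fun ε : ℝ => ∏ j ∈ range m, (1 - ε) / ((n : ℝ) - (j : ℝ) * (1 - ε)))
      ((∏ j ∈ range m, 1 / ((n : ℝ) - (j : ℝ))) *
        (-(m : ℝ) - ∑ j ∈ range m, (j : ℝ) / ((n : ℝ) - (j : ℝ)))) 0 := by
  induction m with
  | zero => simpa using hasDerivAt_const (0 : ℝ) (1 : ℝ)
  | succ m ih =>
    have h3 := (ih (by omega)).mul (aux_factor n m (by omega))
    simp only [prod_range_succ, sum_range_succ]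
    refine HasDerivAt.congr_deriv h3 (Eq.symm ?_)
    simp only [sub_zero, mul_one]
    push_cast
    ring

lemma aux_split (n k i : ℕ) (h : i < k) :
    (∏ j ∈ range i, 1 / ((n : ℝ) - (j : ℝ))) * (1 / ((n : ℝ) - i)) *
      ∏ j ∈ Finset.Ico (i + 1) k, 1 / ((n : ℝ) - (j : ℝ)) =
    ∏ j ∈ range k, 1 / ((n : ℝ) - (j : ℝ)) := by
  rw [← prod_range_succ (fun j : ℕ => 1 / ((n : ℝ) - (j : ℝ)))]
  exact prod_range_mul_prod_Ico _ h

lemma aux_term (n k i : ℕ) (h : i < k) (hkn : k < n) :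
    HasDerivAt (fun ε : ℝ => (∏ j ∈ range i, (1 - ε) / ((n : ℝ) - (j : ℝ) * (1 - ε))) *
        (((n : ℝ) - ((n : ℝ) - 1) * (1 - ε)) / ((n : ℝ) - (i : ℝ) * (1 - ε))) *
        ∏ j ∈ Finset.Ico (i + 1) k, 1 / ((n : ℝ) - (j : ℝ)))
      ((∏ j ∈ range k, 1 / ((n : ℝ) - (j : ℝ))) *
        ((n : ℝ) - 1 - i - ∑ j ∈ range (i + 1), (j : ℝ) / ((n : ℝ) - (j : ℝ)))) 0 := by
  have h3 := ((aux_prod n i (by omega)).mul (aux_mid n i (by omega))).mul_const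
    (∏ j ∈ Finset.Ico (i + 1) k, 1 / ((n : ℝ) - (j : ℝ)))
  refine HasDerivAt.congr_deriv h3 (Eq.symm ?_)
  rw [← aux_split n k i h, sum_range_succ]
  simp only [sub_zero, mul_one, sub_sub_cancel]
  ring

lemma aux_sum (n k : ℕ) :
    ∑ i ∈ range k, ((n : ℝ) - 1 - i - ∑ j ∈ range (i + 1), (j : ℝ) / ((n : ℝ) - (j : ℝ))) =
    (k : ℝ) * ((n : ℝ) - ((k : ℝ) + 1) / 2) -
      ∑ j ∈ range k, (j : ℝ) * ((k : ℝ) - (j : ℝ)) / ((n : ℝ) - (j : ℝ)) := by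
  induction k with
  | zero => simp
  | succ k ih =>
    have e : ∑ j ∈ range (k + 1), (j : ℝ) * (((k + 1 : ℕ) : ℝ) - (j : ℝ)) / ((n : ℝ) - (j : ℝ)) =
        ∑ j ∈ range k, (j : ℝ) * ((k : ℝ) - (j : ℝ)) / ((n : ℝ) - (j : ℝ)) +
        ∑ j ∈ range (k + 1), (j : ℝ) / ((n : ℝ) - (j : ℝ)) := by
      rw [sum_range_succ, sum_range_succ, ← add_assoc, ← sum_add_distrib]
      push_cast
      congr 1
      · exact sum_congr rfl fun j _ => by ring
      · ring
    rw [sum_range_succ, ih, e]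
    push_cast
    ring

lemma aux_fact (n k : ℕ) (hk : 1 ≤ k) (hkn : k < n) :
    ((k - 1).factorial : ℝ) * (∏ j ∈ range k, 1 / ((n : ℝ) - (j : ℝ))) * k =
      ((n.choose k : ℝ))⁻¹ := by
  rw [← aux_choose n k hkn.le, ← Nat.mul_factorial_pred (by omega : k ≠ 0)]
  push_cast
  ring

/-- `p₀(1) = p₁(1) = C(n,k)⁻¹ = p`, and the derivatives at `ε = 0` of the
perturbed subsampling probabilities satisfy
`(d/dε) p₀(1−ε)|₀ = p(−k − Σ_{j=0}^{k−1} j/(n−j))` and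
`(d/dε) p₁(1−ε)|₀ = p(n − (k+1)/2 − (1/k) Σ_{j=0}^{k−1} j(k−j)/(n−j))`. -/
theorem perturbed_subsampling_probabilities_derivatives
    (n k : ℕ) (hk : 1 ≤ k) (hkn : k < n) :
    pZero n k 1 = ((n.choose k : ℝ))⁻¹ ∧
    pOne n k 1 = ((n.choose k : ℝ))⁻¹ ∧
    HasDerivAt (fun ε : ℝ => pZero n k (1 - ε))
      (((n.choose k : ℝ))⁻¹ *
        (-(k : ℝ) - ∑ j ∈ range k, (j : ℝ) / ((n : ℝ) - (j : ℝ)))) 0 ∧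
    HasDerivAt (fun ε : ℝ => pOne n k (1 - ε))
      (((n.choose k : ℝ))⁻¹ *
        ((n : ℝ) - ((k : ℝ) + 1) / 2 -
          (k : ℝ)⁻¹ *
            ∑ j ∈ range k, (j : ℝ) * ((k : ℝ) - (j : ℝ)) / ((n : ℝ) - (j : ℝ)))) 0 := by
  have hk0 : (k : ℝ) ≠ 0 := by exact_mod_cast (by omega : k ≠ 0)
  refine ⟨?_, ?_, ?_, ?_⟩
  · simpa [pZero] using aux_choose n k hkn.le
  · rw [← aux_fact n k hk hkn, pOne]
    rw [sum_congr rfl (g := fun _ => ∏ j ∈ range k, 1 / ((n : ℝ) - (j : ℝ)))]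
    · rw [sum_const, card_range, nsmul_eq_mul]
      ring
    · intro i hi
      rw [← aux_split n k i (mem_range.1 hi)]
      simp only [mul_one, sub_sub_cancel]
  · have h := (aux_prod n k hkn.le).const_mul (k.factorial : ℝ)
    rw [← mul_assoc, aux_choose n k hkn.le] at h
    exact h
  · have h := (HasDerivAt.fun_sum (u := range k)
      fun i hi => aux_term n k i (mem_range.1 hi) hkn).const_mul ((k - 1).factorial : ℝ)
    rw [← mul_sum, aux_sum] at h
    unfold pOne
    refine HasDerivAt.congr_deriv h (Eq.symm ?_)
    rw [← aux_fact n k hk hkn]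
    field_simp
end
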